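/- Let Δ be the bicyclic graph built as follows: take two vertices t and r joined by three internally disjoint paths S₁: t–a₁–a₂–a₃–r, S₂: t–b₁–b₂–b₃–r, and S₃ of length ℓ ≥ 1 with no trees attached at its internal vertices; attach a rooted tree T_i at a_i and a rooted tree Λ_i at b_i for i = 1, 2, 3, a rooted tree Υ at t and a rooted tree Θ at r. Assume T_i ≅ Λ_i as rooted trees for each i, that Υ is not isomorphic to Θ as a rooted tree, and that ℓ ≠ 4 or at least one T_i has more than one vertex. Set G_i = Aut(T_i)_{root}, H = Aut(Υ)_{root}, K = Aut(Θ)_{root}. Then Aut(Δ) ≅ H × K × ((G₁ × G₂ × G₃) ≀ Z₂). -/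

import Mathlib

open SimpleGraph

/-- The stabilizer `Aut(G)_v = {f ∈ Aut(G) : f(v) = v}` of a vertex `v` in the automorphism
group of a graph `G`. -/
def autStab {V : Type} (G : SimpleGraph V) (v : V) : Subgroup (G ≃g G) where
  carrier := {f | f v = v}
  one_mem' := rfl
  mul_mem' := by
    intro f g hf hg
    simp only [Set.mem_setOf_eq] at *
    show f (g v) = v
    rw [hg, hf]
  inv_mem' := by
    intro f hf
    simp only [Set.mem_setOf_eq] at *
    calc f⁻¹ v = f⁻¹ (f v) := by rw [hf]
    _ = v := RelIso.inv_apply_self f v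

/-- The swap action of `Z₂` on `G × G`. -/
def swapHom (G : Type) [Group G] : Multiplicative (ZMod 2) →* MulAut (G × G) where
  toFun g := if Multiplicative.toAdd g = 1 then (MulEquiv.prodComm : G × G ≃* G × G) else 1
  map_one' := by
    show (if (0 : ZMod 2) = 1 then (MulEquiv.prodComm : G × G ≃* G × G) else 1) = 1
    norm_num
  map_mul' x y := by
    have h2 : ∀ z : ZMod 2, z = 0 ∨ z = 1 := by decide
    have hs : (MulEquiv.prodComm : G × G ≃* G × G) * MulEquiv.prodComm = 1 := by
      ext z <;> rfl
    show (if Multiplicative.toAdd x + Multiplicative.toAdd y = 1 then _ else _) = _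
    rcases h2 (Multiplicative.toAdd x) with hx | hx <;>
      rcases h2 (Multiplicative.toAdd y) with hy | hy <;>
        simp [hx, hy, hs, show (1 + 1 : ZMod 2) = 0 from rfl,
          show (0 : ZMod 2) ≠ 1 by decide, show (1 : ZMod 2) ≠ 0 by decide]

/-- The wreath product `G ≀ Z₂ = (G × G) ⋊ Z₂`, where the nontrivial element of `Z₂`
swaps the two coordinates. -/
def wreathZ2 (G : Type) [Group G] : Type :=
  (G × G) ⋊[swapHom G] Multiplicative (ZMod 2)

instance (G : Type) [Group G] : Group (wreathZ2 G) :=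
  inferInstanceAs (Group ((G × G) ⋊[swapHom G] Multiplicative (ZMod 2)))

/-- The graph obtained from `base` by attaching, for each `i : ι`, the rooted tree
`(T i, t i)` at the vertex `x i` (identifying the root `t i` with `x i`); the attached trees
are pairwise disjoint and disjoint from `base` except at the attachment vertices. -/
def attachTrees {B : Type} (base : SimpleGraph B) {ι : Type} {W : ι → Type}
    (T : ∀ i, SimpleGraph (W i)) (t : ∀ i, W i) (x : ι → B) :
    SimpleGraph (B ⊕ Σ i, {w : W i // w ≠ t i}) where
  Adj a b :=
    match a, b with
    | .inl a, .inl b => base.Adj a b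
    | .inl a, .inr ⟨i, w⟩ => a = x i ∧ (T i).Adj (t i) w.1
    | .inr ⟨i, w⟩, .inl b => b = x i ∧ (T i).Adj (t i) w.1
    | .inr ⟨i, w⟩, .inr ⟨j, w'⟩ => ∃ h : i = j, (T j).Adj (h ▸ w).1 w'.1
  symm := by
    refine ⟨?_⟩
    rintro (a | ⟨i, w⟩) (b | ⟨j, w'⟩) h
    · exact base.adj_symm h
    · exact h
    · exact h
    · obtain ⟨rfl, hw⟩ := h
      exact ⟨rfl, (T i).adj_symm hw⟩
  loopless := by
    refine ⟨?_⟩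
    rintro (a | ⟨i, w⟩) h
    · exact base.loopless.irrefl a h
    · obtain ⟨h', hw⟩ := h
      exact (T i).loopless.irrefl _ hw

/-- Vertices of a theta graph: two hub vertices `u`, `v` joined by three internally disjoint
paths having `p`, `q` and `r` internal vertices respectively. -/
inductive ThetaV (p q r : ℕ) : Type where
  | u : ThetaV p q r
  | v : ThetaV p q r
  | x1 : Fin p → ThetaV p q r
  | x2 : Fin q → ThetaV p q r
  | x3 : Fin r → ThetaV p q r
  deriving DecidableEq

/-- The theta graph: the vertices `u` and `v` joined by three internally disjoint paths of
lengths `p + 1`, `q + 1` and `r + 1`; the internal vertices of each path are indexed starting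
from the end adjacent to `v`. -/
def theta (p q r : ℕ) : SimpleGraph (ThetaV p q r) where
  Adj a b :=
    match a, b with
    | .u, .v => p = 0 ∨ q = 0 ∨ r = 0
    | .v, .u => p = 0 ∨ q = 0 ∨ r = 0
    | .v, .x1 i => i.val = 0
    | .x1 i, .v => i.val = 0
    | .u, .x1 i => i.val = p - 1
    | .x1 i, .u => i.val = p - 1
    | .v, .x2 i => i.val = 0
    | .x2 i, .v => i.val = 0
    | .u, .x2 i => i.val = q - 1
    | .x2 i, .u => i.val = q - 1
    | .v, .x3 i => i.val = 0
    | .x3 i, .v => i.val = 0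
    | .u, .x3 i => i.val = r - 1
    | .x3 i, .u => i.val = r - 1
    | .x1 i, .x1 j => i.val + 1 = j.val ∨ j.val + 1 = i.val
    | .x2 i, .x2 j => i.val + 1 = j.val ∨ j.val + 1 = i.val
    | .x3 i, .x3 j => i.val + 1 = j.val ∨ j.val + 1 = i.val
    | _, _ => False
  symm := by
    refine ⟨?_⟩
    intro a b h
    cases a <;> cases b <;> simp only [] at h ⊢ <;> tauto
  loopless := by
    refine ⟨?_⟩
    intro a h
    cases a <;> simp only [] at h <;> omega

/-- Index type for the trees attached in Lemma 2.6: `T₁, T₂, T₃` on the first path,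
`Λ₁, Λ₂, Λ₃` on the second path, and `Υ`, `Θ` at the hub vertices `t`, `r`. -/
abbrev Stmt6Index : Type := (Fin 3 ⊕ Fin 3) ⊕ (Unit ⊕ Unit)

/-- The family of vertex types of the attached trees. -/
def stmt6W (WT WΛ : Fin 3 → Type) (WΥ WΘ : Type) : Stmt6Index → Type :=
  Sum.elim (Sum.elim WT WΛ) (Sum.elim (fun _ => WΥ) (fun _ => WΘ))

/-- The family of attached trees. -/
def stmt6T {WT WΛ : Fin 3 → Type} {WΥ WΘ : Type}
    (TT : ∀ j, SimpleGraph (WT j)) (TΛ : ∀ j, SimpleGraph (WΛ j))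
    (TΥ : SimpleGraph WΥ) (TΘ : SimpleGraph WΘ) :
    ∀ i, SimpleGraph (stmt6W WT WΛ WΥ WΘ i) :=
  fun i =>
    match i with
    | .inl (.inl j) => TT j
    | .inl (.inr j) => TΛ j
    | .inr (.inl _) => TΥ
    | .inr (.inr _) => TΘ

/-- The family of roots of the attached trees. -/
def stmt6root {WT WΛ : Fin 3 → Type} {WΥ WΘ : Type}
    (tT : ∀ j, WT j) (tΛ : ∀ j, WΛ j) (tΥ : WΥ) (tΘ : WΘ) :
    ∀ i, stmt6W WT WΛ WΥ WΘ i :=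
  fun i =>
    match i with
    | .inl (.inl j) => tT j
    | .inl (.inr j) => tΛ j
    | .inr (.inl _) => tΥ
    | .inr (.inr _) => tΘ

/-- Attachment vertices on the theta graph with hub vertices `t = v` and `r = u`, paths
`S₁ : t–a₁–a₂–a₃–r`, `S₂ : t–b₁–b₂–b₃–r` and `S₃` of length `m + 1`: the tree `T_j` is
attached at `a_j`, `Λ_j` at `b_j`, `Υ` at `t` and `Θ` at `r`. -/
def stmt6x (m : ℕ) : Stmt6Index → ThetaV 3 3 m :=
  fun i =>
    match i with
    | .inl (.inl j) => ThetaV.x1 j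
    | .inl (.inr j) => ThetaV.x2 j
    | .inr (.inl _) => ThetaV.v
    | .inr (.inr _) => ThetaV.u

/-- The bicyclic graph of Lemma 2.6. -/
def stmt6Graph (m : ℕ) {WT WΛ : Fin 3 → Type} {WΥ WΘ : Type}
    (TT : ∀ j, SimpleGraph (WT j)) (TΛ : ∀ j, SimpleGraph (WΛ j))
    (TΥ : SimpleGraph WΥ) (TΘ : SimpleGraph WΘ)
    (tT : ∀ j, WT j) (tΛ : ∀ j, WΛ j) (tΥ : WΥ) (tΘ : WΘ) :=
  attachTrees (theta 3 3 m) (stmt6T TT TΛ TΥ TΘ) (stmt6root tT tΛ tΥ tΘ) (stmt6x m)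

namespace LinkType

/-- In a tree, a vertex has at most one neighbour which is not farther from the root. -/
lemma tree_parent_unique {W : Type} {T : SimpleGraph W} (hT : T.IsTree) (r : W) {w a b : W}
    (ha : T.Adj a w) (hb : T.Adj b w) (hda : T.dist r a ≤ T.dist r w)
    (hdb : T.dist r b ≤ T.dist r w) : a = b := by
  have key : ∀ c, T.Adj c w → T.dist r c ≤ T.dist r w →
      T.dist r w = T.dist r c + 1 := by
    intro c hc hd
    have := hT.dist_eq_dist_add_one_of_adj r hc
    omega
  have ha' := key a ha hda
  have hb' := key b hb hdb
  obtain ⟨p, -, hp⟩ := hT.connected.exists_path_of_dist r a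
  obtain ⟨q, -, hq⟩ := hT.connected.exists_path_of_dist r b
  have hp' : (p.concat ha).IsPath :=
    Walk.isPath_of_length_eq_dist _ (by rw [Walk.length_concat]; omega)
  have hq' : (q.concat hb).IsPath :=
    Walk.isPath_of_length_eq_dist _ (by rw [Walk.length_concat]; omega)
  have := hT.isAcyclic.path_unique ⟨_, hp'⟩ ⟨_, hq'⟩
  exact (Walk.concat_inj (Subtype.mk.inj this)).1

/-- The rooted product: at each vertex `b` of the base, the rooted graph `(T b, r b)`. -/
def rp {B : Type} (base : SimpleGraph B) {W : B → Type} (T : ∀ b, SimpleGraph (W b))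
    (r : ∀ b, W b) : SimpleGraph (Σ b, W b) where
  Adj p q := (∃ h : p.1 = q.1, (T q.1).Adj (h ▸ p.2) q.2) ∨
    (base.Adj p.1 q.1 ∧ p.2 = r p.1 ∧ q.2 = r q.1)
  symm := by
    refine ⟨?_⟩
    rintro ⟨b, w⟩ ⟨b', w'⟩ (⟨h, hw⟩ | ⟨h, h1, h2⟩)
    · dsimp only at h
      subst h
      exact Or.inl ⟨rfl, (T b).adj_symm hw⟩
    · exact Or.inr ⟨base.adj_symm h, h2, h1⟩
  loopless := by
    refine ⟨?_⟩
    rintro ⟨b, w⟩ (⟨h, hw⟩ | ⟨h, h1, h2⟩)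
    · exact (T b).loopless.irrefl _ hw
    · exact base.loopless.irrefl _ h

section
variable {B : Type} {base : SimpleGraph B} {W : B → Type} {T : ∀ b, SimpleGraph (W b)}
    {r : ∀ b, W b}

lemma rp_same {b : B} {w w' : W b} :
    (rp base T r).Adj ⟨b, w⟩ ⟨b, w'⟩ ↔ (T b).Adj w w' := by
  constructor
  · rintro (⟨h, hw⟩ | ⟨h, h1, h2⟩)
    · exact hw
    · exact absurd h (base.loopless.irrefl _)
  · intro h
    exact Or.inl ⟨rfl, h⟩

lemma rp_root {b b' : B} :
    (rp base T r).Adj ⟨b, r b⟩ ⟨b', r b'⟩ ↔ base.Adj b b' := by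
  constructor
  · rintro (⟨h, hw⟩ | ⟨h, h1, h2⟩)
    · dsimp only at h
      subst h
      exact absurd hw ((T b).loopless.irrefl _)
    · exact h
  · intro h
    exact Or.inr ⟨h, rfl, rfl⟩

lemma rp_diff {b b' : B} (hb : b ≠ b') {w : W b} {w' : W b'} :
    (rp base T r).Adj ⟨b, w⟩ ⟨b', w'⟩ ↔ base.Adj b b' ∧ w = r b ∧ w' = r b' := by
  constructor
  · rintro (⟨h, hw⟩ | h)
    · exact absurd h hb
    · exact h
  · intro h
    exact Or.inr h

lemma rp_nonroot {b : B} {w : W b} (hw : w ≠ r b) {q : Σ b, W b}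
    (h : (rp base T r).Adj ⟨b, w⟩ q) : ∃ w', q = ⟨b, w'⟩ ∧ (T b).Adj w w' := by
  obtain ⟨b', w'⟩ := q
  by_cases hb : b = b'
  · subst hb
    exact ⟨w', rfl, rp_same.1 h⟩
  · exact absurd ((rp_diff hb).1 h).2.1 hw

/-- Automorphisms map roots to roots. -/
lemma rp_root_map [∀ b, Finite (W b)] (hT : ∀ b, (T b).IsTree)
    (hdeg : ∀ b, ∃ c d, c ≠ d ∧ base.Adj b c ∧ base.Adj b d)
    (f : rp base T r ≃g rp base T r) (b₀ : B) :
    (f ⟨b₀, r b₀⟩).2 = r (f ⟨b₀, r b₀⟩).1 := by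
  by_contra hcon
  obtain ⟨b, hb⟩ : ∃ b, b = (f ⟨b₀, r b₀⟩).1 := ⟨_, rfl⟩
  let S : Set (W b) := {w | w ≠ r b ∧ ∃ a, f ⟨a, r a⟩ = ⟨b, w⟩}
  have hS : S.Nonempty := by
    subst hb
    exact ⟨_, hcon, b₀, rfl⟩
  obtain ⟨w, ⟨hw, a, ha⟩, hmax⟩ := Set.exists_max_image S (fun w => (T b).dist (r b) w)
    S.toFinite hS
  obtain ⟨c, d, hcd, hac, had⟩ := hdeg a
  have key : ∀ c, base.Adj a c → ∃ w', f ⟨c, r c⟩ = ⟨b, w'⟩ ∧ (T b).Adj w' w ∧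
      (T b).dist (r b) w' ≤ (T b).dist (r b) w := by
    intro c hc
    have h1 : (rp base T r).Adj (f ⟨a, r a⟩) (f ⟨c, r c⟩) := f.map_rel_iff.2 (rp_root.2 hc)
    rw [ha] at h1
    obtain ⟨w', hw', hadj⟩ := rp_nonroot hw h1
    refine ⟨w', hw', hadj.symm, ?_⟩
    by_cases hr : w' = r b
    · rw [hr, SimpleGraph.dist_self]
      exact Nat.zero_le _
    · exact hmax w' ⟨hr, c, hw'⟩
  obtain ⟨w1, e1, a1, d1⟩ := key c hac
  obtain ⟨w2, e2, a2, d2⟩ := key d had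
  have := tree_parent_unique (hT b) (r b) a1 a2 d1 d2
  subst this
  have h := f.injective (e1.trans e2.symm)
  exact hcd (congrArg Sigma.fst h)

/-- Structure of automorphisms of rooted products. -/
theorem rp_structure [∀ b, Finite (W b)] (hT : ∀ b, (T b).IsTree)
    (hdeg : ∀ b, ∃ c d, c ≠ d ∧ base.Adj b c ∧ base.Adj b d)
    (f : rp base T r ≃g rp base T r) :
    ∃ fB : base ≃g base, ∀ b b', fB b = b' → ∃ g : T b ≃g T b', g (r b) = r b' ∧
      ∀ w, f ⟨b, w⟩ = ⟨b', g w⟩ := by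
  have main : ∀ f : rp base T r ≃g rp base T r, ∀ b, f ⟨b, r b⟩ =
      ⟨(f ⟨b, r b⟩).1, r (f ⟨b, r b⟩).1⟩ := by
    intro f b
    have := rp_root_map hT hdeg f b
    exact Sigma.ext rfl (heq_of_eq this)
  let F : (rp base T r ≃g rp base T r) → B → B := fun f b => (f ⟨b, r b⟩).1
  have hF : ∀ (f : rp base T r ≃g rp base T r) (b : B), f ⟨b, r b⟩ = ⟨F f b, r (F f b)⟩ := main
  have hinv : ∀ (f : rp base T r ≃g rp base T r) (b : B), F f.symm (F f b) = b := by
    intro f b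
    have h1 := hF f b
    have h2 := hF f.symm (F f b)
    rw [← h1, RelIso.symm_apply_apply] at h2
    exact (congrArg Sigma.fst h2).symm
  let fB : base ≃g base :=
    { toFun := F f
      invFun := F f.symm
      left_inv := hinv f
      right_inv := hinv f.symm
      map_rel_iff' := by
        intro a b
        show base.Adj (F f a) (F f b) ↔ base.Adj a b
        rw [← rp_root (T := T) (r := r), ← hF, ← hF, ← rp_root (T := T) (r := r)]
        exact f.map_rel_iff }
  have hfst : ∀ (f : rp base T r ≃g rp base T r) (b : B) (w : W b), (f ⟨b, w⟩).1 = F f b := by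
    intro f b w
    obtain ⟨p⟩ := (hT b).connected w (r b)
    generalize hz : r b = z at p
    induction p with
    | nil =>
      subst hz
      rfl
    | @cons x y z hxy p ih =>
      have ih := ih hz
      rw [← ih]
      by_cases hx : x = r b
      · rw [ih, hx]
      · have hadj : (rp base T r).Adj (f ⟨b, x⟩) (f ⟨b, y⟩) := f.map_rel_iff.2 (rp_same.2 hxy)
        obtain ⟨c, v, hc⟩ : ∃ c v, f ⟨b, x⟩ = ⟨c, v⟩ := ⟨_, _, rfl⟩
        have hv : v ≠ r c := by
          rintro rfl
          have h3 := hF f.symm c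
          rw [← hc, RelIso.symm_apply_apply] at h3
          apply hx
          have h4 : b = F f.symm c := congrArg Sigma.fst h3
          rw [← h4] at h3
          exact eq_of_heq (Sigma.mk.inj h3).2
        rw [hc] at hadj ⊢
        obtain ⟨w', hw', -⟩ := rp_nonroot hv hadj
        rw [hw']
  refine ⟨fB, ?_⟩
  rintro b b' rfl
  have hex : ∀ w, ∃ w', f ⟨b, w⟩ = ⟨fB b, w'⟩ := by
    intro w
    have h := hfst f b w
    obtain ⟨c, v, hc⟩ : ∃ c v, f ⟨b, w⟩ = ⟨c, v⟩ := ⟨_, _, rfl⟩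
    rw [hc] at h
    dsimp only at h
    subst h
    exact ⟨v, hc⟩
  choose g hg using hex
  have ginj : Function.Injective g := by
    intro x y hxy
    have : f ⟨b, x⟩ = f ⟨b, y⟩ := by rw [hg, hg, hxy]
    exact eq_of_heq (Sigma.mk.inj (f.injective this)).2
  have gsurj : Function.Surjective g := by
    intro y
    have h1 := hfst f.symm (fB b) y
    have h2 : F f.symm (fB b) = b := hinv f b
    rw [h2] at h1
    obtain ⟨c, v, hc⟩ : ∃ c v, f.symm ⟨fB b, y⟩ = ⟨c, v⟩ := ⟨_, _, rfl⟩
    rw [hc] at h1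
    dsimp only at h1
    subst h1
    refine ⟨v, ?_⟩
    have h3 : f ⟨c, v⟩ = ⟨fB c, y⟩ := by rw [← hc, RelIso.apply_symm_apply]
    rw [hg] at h3
    exact eq_of_heq (Sigma.mk.inj h3).2
  refine ⟨{ toEquiv := Equiv.ofBijective g ⟨ginj, gsurj⟩, map_rel_iff' := ?_ }, ?_, hg⟩
  · intro x y
    show (T _).Adj (g x) (g y) ↔ _
    rw [← rp_same (base := base) (T := T) (r := r), ← hg, ← hg,
      ← rp_same (base := base) (T := T) (r := r)]
    exact f.map_rel_iff
  · show g (r b) = r (fB b)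
    have h3 := (hg (r b)).symm.trans (hF f b)
    exact eq_of_heq (Sigma.mk.inj h3).2

end

section theta
variable {m : ℕ}

lemma theta_deg (b : ThetaV 3 3 m) :
    ∃ c d, c ≠ d ∧ (theta 3 3 m).Adj b c ∧ (theta 3 3 m).Adj b d := by
  cases b with
  | u => exact ⟨.x1 2, .x2 2, by simp, rfl, rfl⟩
  | v => exact ⟨.x1 0, .x2 0, by simp, rfl, rfl⟩
  | x1 j =>
    fin_cases j
    · exact ⟨.v, .x1 1, by simp, rfl, Or.inl rfl⟩
    · exact ⟨.x1 0, .x1 2, by simp, Or.inr rfl, Or.inl rfl⟩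
    · exact ⟨.x1 1, .u, by simp, Or.inr rfl, rfl⟩
  | x2 j =>
    fin_cases j
    · exact ⟨.v, .x2 1, by simp, rfl, Or.inl rfl⟩
    · exact ⟨.x2 0, .x2 2, by simp, Or.inr rfl, Or.inl rfl⟩
    · exact ⟨.x2 1, .u, by simp, Or.inr rfl, rfl⟩
  | x3 j =>
    obtain ⟨j, hj⟩ := j
    by_cases h0 : j = 0
    · by_cases h1 : j = m - 1
      · exact ⟨.v, .u, by simp, h0, h1⟩
      · exact ⟨.v, .x3 ⟨j + 1, by omega⟩, by simp, h0, Or.inl rfl⟩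
    · by_cases h1 : j = m - 1
      · exact ⟨.x3 ⟨j - 1, by omega⟩, .u, by simp, Or.inr (by show j - 1 + 1 = j; omega), h1⟩
      · exact ⟨.x3 ⟨j - 1, by omega⟩, .x3 ⟨j + 1, by omega⟩, by simp,
          Or.inr (by show j - 1 + 1 = j; omega), Or.inl rfl⟩

lemma nbr_v {z : ThetaV 3 3 m} (h : (theta 3 3 m).Adj .v z) :
    z = .x1 0 ∨ z = .x2 0 ∨ (∃ h : 0 < m, z = .x3 ⟨0, h⟩) ∨ (m = 0 ∧ z = .u) := by
  cases z with
  | u => simp [theta] at h; simp [h]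
  | v => simp [theta] at h
  | x1 j => left; congr 1; exact Fin.ext h
  | x2 j => right; left; congr 1; exact Fin.ext h
  | x3 j =>
    right; right; left
    exact ⟨by have := j.isLt; omega, congrArg _ (Fin.ext h)⟩

lemma nbr_x1 {j : Fin 3} {z : ThetaV 3 3 m} (h : (theta 3 3 m).Adj (.x1 j) z) :
    (j.val = 0 ∧ z = .v) ∨ (j.val = 2 ∧ z = .u) ∨
      ∃ k : Fin 3, z = .x1 k ∧ (j.val + 1 = k.val ∨ k.val + 1 = j.val) := by
  cases z with
  | u => right; left; exact ⟨h, rfl⟩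
  | v => left; exact ⟨h, rfl⟩
  | x1 k => right; right; exact ⟨k, rfl, h⟩
  | x2 k => exact h.elim
  | x3 k => exact h.elim

lemma nbr_x2 {j : Fin 3} {z : ThetaV 3 3 m} (h : (theta 3 3 m).Adj (.x2 j) z) :
    (j.val = 0 ∧ z = .v) ∨ (j.val = 2 ∧ z = .u) ∨
      ∃ k : Fin 3, z = .x2 k ∧ (j.val + 1 = k.val ∨ k.val + 1 = j.val) := by
  cases z with
  | u => right; left; exact ⟨h, rfl⟩
  | v => left; exact ⟨h, rfl⟩
  | x2 k => right; right; exact ⟨k, rfl, h⟩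
  | x1 k => exact h.elim
  | x3 k => exact h.elim

lemma nbr_x3 {j : Fin m} {z : ThetaV 3 3 m} (h : (theta 3 3 m).Adj (.x3 j) z) :
    (j.val = 0 ∧ z = .v) ∨ (j.val = m - 1 ∧ z = .u) ∨
      ∃ k : Fin m, z = .x3 k ∧ (j.val + 1 = k.val ∨ k.val + 1 = j.val) := by
  cases z with
  | u => right; left; exact ⟨h, rfl⟩
  | v => left; exact ⟨h, rfl⟩
  | x3 k => right; right; exact ⟨k, rfl, h⟩
  | x1 k => exact h.elim
  | x2 k => exact h.elim

lemma deg3 {b c d e : ThetaV 3 3 m} (hc : (theta 3 3 m).Adj b c) (hd : (theta 3 3 m).Adj b d)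
    (he : (theta 3 3 m).Adj b e) (hcd : c ≠ d) (hce : c ≠ e) (hde : d ≠ e) :
    b = .u ∨ b = .v := by
  cases b with
  | u => exact Or.inl rfl
  | v => exact Or.inr rfl
  | x1 j =>
    exfalso
    have h1 := nbr_x1 hc
    have h2 := nbr_x1 hd
    have h3 := nbr_x1 he
    clear hc hd he
    rcases h1 with ⟨g1, rfl⟩ | ⟨g1, rfl⟩ | ⟨k1, rfl, g1⟩ <;>
    rcases h2 with ⟨g2, rfl⟩ | ⟨g2, rfl⟩ | ⟨k2, rfl, g2⟩ <;>
    rcases h3 with ⟨g3, rfl⟩ | ⟨g3, rfl⟩ | ⟨k3, rfl, g3⟩ <;>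
    simp only [ne_eq, ThetaV.x1.injEq, Fin.ext_iff, not_true_eq_false, reduceCtorEq,
      not_false_eq_true] at hcd hce hde <;> omega
  | x2 j =>
    exfalso
    have h1 := nbr_x2 hc
    have h2 := nbr_x2 hd
    have h3 := nbr_x2 he
    clear hc hd he
    rcases h1 with ⟨g1, rfl⟩ | ⟨g1, rfl⟩ | ⟨k1, rfl, g1⟩ <;>
    rcases h2 with ⟨g2, rfl⟩ | ⟨g2, rfl⟩ | ⟨k2, rfl, g2⟩ <;>
    rcases h3 with ⟨g3, rfl⟩ | ⟨g3, rfl⟩ | ⟨k3, rfl, g3⟩ <;>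
    simp only [ne_eq, ThetaV.x2.injEq, Fin.ext_iff, not_true_eq_false, reduceCtorEq,
      not_false_eq_true] at hcd hce hde <;> omega
  | x3 j =>
    exfalso
    have h1 := nbr_x3 hc
    have h2 := nbr_x3 hd
    have h3 := nbr_x3 he
    clear hc hd he
    rcases h1 with ⟨g1, rfl⟩ | ⟨g1, rfl⟩ | ⟨k1, rfl, g1⟩ <;>
    rcases h2 with ⟨g2, rfl⟩ | ⟨g2, rfl⟩ | ⟨k2, rfl, g2⟩ <;>
    rcases h3 with ⟨g3, rfl⟩ | ⟨g3, rfl⟩ | ⟨k3, rfl, g3⟩ <;>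
    simp [Fin.ext_iff] at * <;> omega

/-- A copy of a path of three internal vertices in direction from `v` to `u`. -/
lemma path_image (φ : theta 3 3 m ≃g theta 3 3 m) (hv : φ .v = .v) (hu : φ .u = .u)
    (p : Fin 3 → ThetaV 3 3 m) (h0 : (theta 3 3 m).Adj .v (p 0))
    (h1 : (theta 3 3 m).Adj (p 0) (p 1)) (h2 : (theta 3 3 m).Adj (p 1) (p 2))
    (h3 : (theta 3 3 m).Adj (p 2) .u) (hp : Function.Injective p)
    (hpv : ∀ j, p j ≠ .v) (hpu : ∀ j, p j ≠ .u) :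
    (∀ j, φ (p j) = .x1 j) ∨ (∀ j, φ (p j) = .x2 j) ∨
      (∃ h : m = 3, ∀ j : Fin 3, φ (p j) = .x3 ⟨j.val, by omega⟩) := by
  have a0 := φ.map_rel_iff.2 h0
  have a1 := φ.map_rel_iff.2 h1
  have a2 := φ.map_rel_iff.2 h2
  have a3 := φ.map_rel_iff.2 h3
  have n01 : φ (p 0) ≠ φ (p 1) := fun h => by simpa using hp (φ.injective h)
  have n02 : φ (p 0) ≠ φ (p 2) := fun h => by simpa using hp (φ.injective h)
  have n12 : φ (p 1) ≠ φ (p 2) := fun h => by simpa using hp (φ.injective h)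
  have nv : ∀ j, φ (p j) ≠ .v := fun j h => hpv j (φ.injective (h.trans hv.symm))
  have nu : ∀ j, φ (p j) ≠ .u := fun j h => hpu j (φ.injective (h.trans hu.symm))
  rw [hv] at a0
  rw [hu] at a3
  have f3 : ∀ P : Fin 3 → Prop, P 0 → P 1 → P 2 → ∀ j, P j := by
    intro P p0 p1 p2 j
    fin_cases j
    · exact p0
    · exact p1
    · exact p2
  have nv0 := nv 0
  have nv1 := nv 1
  have nv2 := nv 2
  have nu0 := nu 0
  have nu1 := nu 1
  have nu2 := nu 2
  rcases nbr_v a0 with e | e | ⟨hm, e⟩ | ⟨hm, e⟩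
  · left
    rw [e] at a1 n01 n02
    rcases nbr_x1 a1 with ⟨-, e1⟩ | ⟨-, e1⟩ | ⟨k, e1, hk⟩
    · exact absurd e1 nv1
    · exact absurd e1 nu1
    obtain rfl : k = 1 := by ext; simp at hk; simp; omega
    rw [e1] at a2
    rcases nbr_x1 a2 with ⟨-, e2⟩ | ⟨-, e2⟩ | ⟨k, e2, hk⟩
    · exact absurd e2 nv2
    · exact absurd e2 nu2
    have hk0 : k.val ≠ 0 := by
      intro h
      obtain rfl : k = 0 := Fin.ext h
      exact n02 e2.symm
    obtain rfl : k = 2 := by ext; simp at hk; simp; omega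
    exact f3 _ e e1 e2
  · right; left
    rw [e] at a1 n01 n02
    rcases nbr_x2 a1 with ⟨-, e1⟩ | ⟨-, e1⟩ | ⟨k, e1, hk⟩
    · exact absurd e1 nv1
    · exact absurd e1 nu1
    obtain rfl : k = 1 := by ext; simp at hk; simp; omega
    rw [e1] at a2
    rcases nbr_x2 a2 with ⟨-, e2⟩ | ⟨-, e2⟩ | ⟨k, e2, hk⟩
    · exact absurd e2 nv2
    · exact absurd e2 nu2
    have hk0 : k.val ≠ 0 := by
      intro h
      obtain rfl : k = 0 := Fin.ext h
      exact n02 e2.symm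
    obtain rfl : k = 2 := by ext; simp at hk; simp; omega
    exact f3 _ e e1 e2
  · right; right
    rw [e] at a1 n01 n02
    rcases nbr_x3 a1 with ⟨-, e1⟩ | ⟨-, e1⟩ | ⟨⟨k, hkm⟩, e1, hk⟩
    · exact absurd e1 nv1
    · exact absurd e1 nu1
    obtain rfl : k = 1 := by simp at hk; omega
    rw [e1] at a2
    rcases nbr_x3 a2 with ⟨-, e2⟩ | ⟨-, e2⟩ | ⟨⟨k, hkm⟩, e2, hk⟩
    · exact absurd e2 nv2
    · exact absurd e2 nu2
    have hk0 : k ≠ 0 := by rintro rfl; exact n02 e2.symm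
    obtain rfl : k = 2 := by simp at hk; omega
    rw [e2] at a3
    have hm3 : 2 = m - 1 := a3
    refine ⟨by omega, f3 _ ?_ ?_ ?_⟩
    · exact e
    · exact e1
    · exact e2
  · exact absurd e nu0

theorem theta_aut (φ : theta 3 3 m ≃g theta 3 3 m) (hvu : φ .v ≠ .u)
    (hx : m ≠ 3 ∨ ∃ j, ∀ i, φ (.x1 j) ≠ .x3 i ∧ φ (.x2 j) ≠ .x3 i) :
    φ .v = .v ∧ φ .u = .u ∧ (∀ i, φ (.x3 i) = .x3 i) ∧
      ((∀ j, φ (.x1 j) = .x1 j ∧ φ (.x2 j) = .x2 j) ∨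
        (∀ j, φ (.x1 j) = .x2 j ∧ φ (.x2 j) = .x1 j)) := by
  have hinj := φ.injective
  have hub : ∀ b : ThetaV 3 3 m, (b = .u ∨ b = .v) → φ b = .u ∨ φ b = .v := by
    have key : ∀ b c d e : ThetaV 3 3 m, (theta 3 3 m).Adj b c → (theta 3 3 m).Adj b d →
        (theta 3 3 m).Adj b e → c ≠ d → c ≠ e → d ≠ e → φ b = .u ∨ φ b = .v := by
      intro b c d e hc hd he h1 h2 h3
      exact deg3 (φ.map_rel_iff.2 hc) (φ.map_rel_iff.2 hd) (φ.map_rel_iff.2 he)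
        (fun h => h1 (hinj h)) (fun h => h2 (hinj h)) (fun h => h3 (hinj h))
    rintro b (rfl | rfl)
    · by_cases hm : m = 0
      · exact key .u (.x1 2) (.x2 2) .v rfl rfl (Or.inr (Or.inr hm)) (by simp) (by simp) (by simp)
      · exact key .u (.x1 2) (.x2 2) (.x3 ⟨m - 1, by omega⟩) rfl rfl rfl
          (by simp) (by simp) (by simp)
    · by_cases hm : m = 0
      · exact key .v (.x1 0) (.x2 0) .u rfl rfl (Or.inr (Or.inr hm)) (by simp) (by simp) (by simp)
      · exact key .v (.x1 0) (.x2 0) (.x3 ⟨0, by omega⟩) rfl rfl rfl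
          (by simp) (by simp) (by simp)
  have hv : φ .v = .v := (hub .v (Or.inr rfl)).resolve_left hvu
  have hu : φ .u = .u := by
    refine (hub .u (Or.inl rfl)).resolve_right fun h => ?_
    have := hinj (h.trans hv.symm)
    simp at this
  have h1 := path_image φ hv hu .x1 rfl (Or.inl rfl) (Or.inl rfl) rfl
    (fun a b h => by simpa using h) (by simp) (by simp)
  have h2 := path_image φ hv hu .x2 rfl (Or.inl rfl) (Or.inl rfl) rfl
    (fun a b h => by simpa using h) (by simp) (by simp)
  have h1 : (∀ j, φ (.x1 j) = .x1 j) ∨ (∀ j, φ (.x1 j) = .x2 j) := by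
    rcases h1 with h | h | ⟨h, h'⟩
    · exact Or.inl h
    · exact Or.inr h
    · rcases hx with hx | ⟨j, hx⟩
      · exact absurd h hx
      · exact absurd (h' j) (hx _).1
  have h2 : (∀ j, φ (.x2 j) = .x1 j) ∨ (∀ j, φ (.x2 j) = .x2 j) := by
    rcases h2 with h | h | ⟨h, h'⟩
    · exact Or.inl h
    · exact Or.inr h
    · rcases hx with hx | ⟨j, hx⟩
      · exact absurd h hx
      · exact absurd (h' j) (hx _).2
  have h12 : (∀ j, φ (.x1 j) = .x1 j ∧ φ (.x2 j) = .x2 j) ∨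
        (∀ j, φ (.x1 j) = .x2 j ∧ φ (.x2 j) = .x1 j) := by
    rcases h1 with h1 | h1 <;> rcases h2 with h2 | h2
    · have := hinj ((h1 0).trans (h2 0).symm)
      simp at this
    · exact Or.inl fun j => ⟨h1 j, h2 j⟩
    · exact Or.inr fun j => ⟨h1 j, h2 j⟩
    · have := hinj ((h1 0).trans (h2 0).symm)
      simp at this
  refine ⟨hv, hu, ?_, h12⟩
  have nx1 : ∀ i j, φ (.x3 i) ≠ .x1 j := by
    intro i j h
    rcases h12 with h' | h'
    · have := hinj (h.trans (h' j).1.symm)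
      simp at this
    · have := hinj (h.trans (h' j).2.symm)
      simp at this
  have nx2 : ∀ i j, φ (.x3 i) ≠ .x2 j := by
    intro i j h
    rcases h12 with h' | h'
    · have := hinj (h.trans (h' j).2.symm)
      simp at this
    · have := hinj (h.trans (h' j).1.symm)
      simp at this
  have nv : ∀ i, φ (.x3 i) ≠ .v := by
    intro i h
    have := hinj (h.trans hv.symm)
    simp at this
  have nu : ∀ i, φ (.x3 i) ≠ .u := by
    intro i h
    have := hinj (h.trans hu.symm)
    simp at this
  have main : ∀ n (hn : n < m), ∀ k (hk : k ≤ n), φ (.x3 ⟨k, by omega⟩) = .x3 ⟨k, by omega⟩ := by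
    intro n
    induction n with
    | zero =>
      intro hn k hk
      obtain rfl : k = 0 := by omega
      have a : (theta 3 3 m).Adj .v (.x3 ⟨0, hn⟩) := rfl
      have a := φ.map_rel_iff.2 a
      rw [hv] at a
      rcases nbr_v a with e | e | ⟨hm, e⟩ | ⟨hm, e⟩
      · exact absurd e (nx1 _ _)
      · exact absurd e (nx2 _ _)
      · exact e
      · omega
    | succ n ih =>
      intro hn k hk
      have ih := ih (by omega)
      by_cases hkn : k ≤ n
      · exact ih k hkn
      obtain rfl : k = n + 1 := by omega
      have a : (theta 3 3 m).Adj (.x3 ⟨n, by omega⟩) (.x3 ⟨n + 1, hn⟩) := Or.inl rfl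
      have a := φ.map_rel_iff.2 a
      rw [ih n le_rfl] at a
      rcases nbr_x3 a with ⟨-, e⟩ | ⟨-, e⟩ | ⟨⟨k, hkm⟩, e, hk | hk⟩
      · exact absurd e (nv _)
      · exact absurd e (nu _)
      · dsimp only at hk
        subst hk
        exact e
      · exfalso
        dsimp only at hk
        have h3 := hinj (e.trans (ih k (by omega)).symm)
        simp at h3
        omega
  intro i
  exact main i.val i.isLt i.val le_rfl

end theta

/-- Attaching trees is the same as forming a rooted product. -/
lemma attach_iso {B : Type} {base : SimpleGraph B} {ι : Type} {W : ι → Type}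
    {T : ∀ i, SimpleGraph (W i)} {t : ∀ i, W i} {x : ι → B}
    {W' : B → Type} {T' : ∀ b, SimpleGraph (W' b)} {r' : ∀ b, W' b}
    (hx : Function.Injective x) (E : ∀ i, T i ≃g T' (x i)) (hE : ∀ i, E i (t i) = r' (x i))
    (hs : ∀ b, (∃ i, b = x i) ∨ Subsingleton (W' b)) :
    Nonempty (attachTrees base T t x ≃g rp base T' r') := by
  let F : (B ⊕ Σ i, {w : W i // w ≠ t i}) → Σ b, W' b := fun a =>
    match a with
    | .inl b => ⟨b, r' b⟩
    | .inr ⟨i, w⟩ => ⟨x i, E i w.1⟩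
  have hne : ∀ i (w : {w : W i // w ≠ t i}), E i w.1 ≠ r' (x i) := by
    intro i w h
    rw [← hE] at h
    exact w.2 ((E i).injective h)
  have hinj : Function.Injective F := by
    rintro (b | ⟨i, w⟩) (b' | ⟨i', w'⟩) h
    · exact congrArg Sum.inl (congrArg Sigma.fst h)
    · obtain ⟨h1, h2⟩ := Sigma.mk.inj h
      subst h1
      exact absurd (eq_of_heq h2).symm (hne _ _)
    · obtain ⟨h1, h2⟩ := Sigma.mk.inj h
      subst h1
      exact absurd (eq_of_heq h2) (hne _ _)
    · obtain ⟨h1, h2⟩ := Sigma.mk.inj h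
      have h3 := hx h1
      subst h3
      have h4 := (E i).injective (eq_of_heq h2)
      rw [Subtype.ext h4]
  have hsurj : Function.Surjective F := by
    rintro ⟨b, w⟩
    by_cases hw : w = r' b
    · subst hw
      exact ⟨.inl b, rfl⟩
    · rcases hs b with ⟨i, rfl⟩ | h
      · refine ⟨.inr ⟨i, (E i).symm w, ?_⟩, ?_⟩
        · intro h
          apply hw
          rw [← hE, ← h, RelIso.apply_symm_apply]
        · show (⟨x i, E i ((E i).symm w)⟩ : Σ b, W' b) = ⟨x i, w⟩
          rw [RelIso.apply_symm_apply]
      · exact absurd (Subsingleton.elim _ _) hw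
  have hmix : ∀ b i (w : {w : W i // w ≠ t i}),
      (rp base T' r').Adj ⟨b, r' b⟩ ⟨x i, E i w.1⟩ ↔ b = x i ∧ (T i).Adj (t i) w.1 := by
    intro b i w
    by_cases hb : b = x i
    · subst hb
      rw [rp_same, ← hE, (E i).map_rel_iff]
      simp
    · rw [rp_diff hb]
      constructor
      · rintro ⟨-, -, h⟩
        exact absurd h (hne _ _)
      · rintro ⟨h, -⟩
        exact absurd h hb
  refine ⟨{ toEquiv := Equiv.ofBijective F ⟨hinj, hsurj⟩, map_rel_iff' := ?_ }⟩
  rintro (b | ⟨i, w⟩) (b' | ⟨i', w'⟩)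
  · exact rp_root
  · exact hmix b i' w'
  · exact ((rp base T' r').adj_comm _ _).trans (hmix b' i w)
  · show (rp base T' r').Adj ⟨x i, E i w.1⟩ ⟨x i', E i' w'.1⟩ ↔
      ∃ h : i = i', (T i').Adj (h ▸ w).1 w'.1
    by_cases hi : i = i'
    · subst hi
      rw [rp_same, (E i).map_rel_iff]
      simp
    · rw [rp_diff (fun h => hi (hx h))]
      constructor
      · rintro ⟨-, -, h⟩
        exact absurd h (hne _ _)
      · rintro ⟨h, -⟩
        exact absurd h hi

section model
variable {m : ℕ} {WT : Fin 3 → Type} {WΥ WΘ : Type}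

/-- Vertex types of the symmetric model. -/
def MW (m : ℕ) (WT : Fin 3 → Type) (WΥ WΘ : Type) : ThetaV 3 3 m → Type
  | .u => WΘ
  | .v => WΥ
  | .x1 j => WT j
  | .x2 j => WT j
  | .x3 _ => Unit

/-- Trees of the symmetric model. -/
def MT (m : ℕ) (TT : ∀ j, SimpleGraph (WT j)) (TΥ : SimpleGraph WΥ) (TΘ : SimpleGraph WΘ) :
    ∀ b, SimpleGraph (MW m WT WΥ WΘ b)
  | .u => TΘ
  | .v => TΥ
  | .x1 j => TT j
  | .x2 j => TT j
  | .x3 _ => (⊥ : SimpleGraph Unit)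

/-- Roots of the symmetric model. -/
def Mr (m : ℕ) (tT : ∀ j, WT j) (tΥ : WΥ) (tΘ : WΘ) :
    ∀ b, MW m WT WΥ WΘ b
  | .u => tΘ
  | .v => tΥ
  | .x1 j => tT j
  | .x2 j => tT j
  | .x3 _ => ()

variable {TT : ∀ j, SimpleGraph (WT j)} {TΥ : SimpleGraph WΥ} {TΘ : SimpleGraph WΘ}
  {tT : ∀ j, WT j} {tΥ : WΥ} {tΘ : WΘ}

/-- A triple as a family. -/
def fam (g : ↥(autStab (TT 0) (tT 0)) × ↥(autStab (TT 1) (tT 1)) × ↥(autStab (TT 2) (tT 2))) :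
    ∀ j, ↥(autStab (TT j) (tT j))
  | 0 => g.1
  | 1 => g.2.1
  | 2 => g.2.2

lemma fam_mul (g g' : ↥(autStab (TT 0) (tT 0)) × ↥(autStab (TT 1) (tT 1)) ×
    ↥(autStab (TT 2) (tT 2))) (j : Fin 3) (w : WT j) :
    (fam (g * g') j).1 w = (fam g j).1 ((fam g' j).1 w) := by
  fin_cases j <;> rfl

lemma fam_one (j : Fin 3) (w : WT j) :
    (fam (1 : ↥(autStab (TT 0) (tT 0)) × ↥(autStab (TT 1) (tT 1)) ×
    ↥(autStab (TT 2) (tT 2))) j).1 w = w := by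
  fin_cases j <;> rfl

lemma fam_root (g : ↥(autStab (TT 0) (tT 0)) × ↥(autStab (TT 1) (tT 1)) ×
    ↥(autStab (TT 2) (tT 2))) (j : Fin 3) : (fam g j).1 (tT j) = tT j :=
  (fam g j).2

/-- The target group. -/
abbrev Tgt (TT : ∀ j, SimpleGraph (WT j)) (TΥ : SimpleGraph WΥ) (TΘ : SimpleGraph WΘ)
    (tT : ∀ j, WT j) (tΥ : WΥ) (tΘ : WΘ) : Type :=
  ↥(autStab TΥ tΥ) × ↥(autStab TΘ tΘ) ×
        wreathZ2 (↥(autStab (TT 0) (tT 0)) × ↥(autStab (TT 1) (tT 1)) ×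
          ↥(autStab (TT 2) (tT 2)))

/-- The action of the target group on the vertices of the model. -/
def act (a : Tgt TT TΥ TΘ tT tΥ tΘ) :
    (Σ b, MW m WT WΥ WΘ b) → (Σ b, MW m WT WΥ WΘ b)
  | ⟨.v, w⟩ => ⟨.v, a.1.1 w⟩
  | ⟨.u, w⟩ => ⟨.u, a.2.1.1 w⟩
  | ⟨.x1 j, w⟩ => if Multiplicative.toAdd a.2.2.right = 1 then ⟨.x2 j, (fam a.2.2.left.2 j).1 w⟩
      else ⟨.x1 j, (fam a.2.2.left.1 j).1 w⟩
  | ⟨.x2 j, w⟩ => if Multiplicative.toAdd a.2.2.right = 1 then ⟨.x1 j, (fam a.2.2.left.1 j).1 w⟩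
      else ⟨.x2 j, (fam a.2.2.left.2 j).1 w⟩
  | ⟨.x3 i, w⟩ => ⟨.x3 i, w⟩

lemma act_x1_pos (a : Tgt TT TΥ TΘ tT tΥ tΘ) (he : Multiplicative.toAdd a.2.2.right = 1)
    (j : Fin 3) (w : WT j) : act (m := m) a ⟨.x1 j, w⟩ = ⟨.x2 j, (fam a.2.2.left.2 j).1 w⟩ :=
  if_pos he

lemma act_x1_neg (a : Tgt TT TΥ TΘ tT tΥ tΘ) (he : ¬ Multiplicative.toAdd a.2.2.right = 1)
    (j : Fin 3) (w : WT j) : act (m := m) a ⟨.x1 j, w⟩ = ⟨.x1 j, (fam a.2.2.left.1 j).1 w⟩ :=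
  if_neg he

lemma act_x2_pos (a : Tgt TT TΥ TΘ tT tΥ tΘ) (he : Multiplicative.toAdd a.2.2.right = 1)
    (j : Fin 3) (w : WT j) : act (m := m) a ⟨.x2 j, w⟩ = ⟨.x1 j, (fam a.2.2.left.1 j).1 w⟩ :=
  if_pos he

lemma act_x2_neg (a : Tgt TT TΥ TΘ tT tΥ tΘ) (he : ¬ Multiplicative.toAdd a.2.2.right = 1)
    (j : Fin 3) (w : WT j) : act (m := m) a ⟨.x2 j, w⟩ = ⟨.x2 j, (fam a.2.2.left.2 j).1 w⟩ :=
  if_neg he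

lemma act_one (z : Σ b, MW m WT WΥ WΘ b) : act (1 : Tgt TT TΥ TΘ tT tΥ tΘ) z = z := by
  have h1 : Multiplicative.toAdd ((1 : Tgt TT TΥ TΘ tT tΥ tΘ).2.2.right) ≠ 1 := by
    show (0 : ZMod 2) ≠ 1
    decide
  obtain ⟨b, w⟩ := z
  cases b with
  | u => rfl
  | v => rfl
  | x1 j =>
    simp only [act, if_neg h1]
    exact congrArg _ (fam_one j w)
  | x2 j =>
    simp only [act, if_neg h1]
    exact congrArg _ (fam_one j w)
  | x3 i => rfl

lemma act_mul (a b : Tgt TT TΥ TΘ tT tΥ tΘ) (z : Σ b, MW m WT WΥ WΘ b) :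
    act (a * b) z = act a (act b z) := by
  obtain ⟨h, k, ⟨n, e⟩⟩ := a
  obtain ⟨h', k', ⟨n', e'⟩⟩ := b
  have hmul : ((h, k, (⟨n, e⟩ : wreathZ2 _)) : Tgt TT TΥ TΘ tT tΥ tΘ) * (h', k', ⟨n', e'⟩) =
    (h * h', k * k', ⟨n * swapHom _ e n', e * e'⟩) := rfl
  rw [hmul]
  have h2 : ∀ z : Multiplicative (ZMod 2), z = 1 ∨
    z = Multiplicative.ofAdd 1 := by decide
  have s0 : ∀ p, swapHom (↥(autStab (TT 0) (tT 0)) × ↥(autStab (TT 1) (tT 1)) ×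
    ↥(autStab (TT 2) (tT 2))) 1 p = p :=
      fun p => by rw [map_one]; rfl
  have s1 : ∀ p, swapHom (↥(autStab (TT 0) (tT 0)) × ↥(autStab (TT 1) (tT 1)) ×
    ↥(autStab (TT 2) (tT 2))) (Multiplicative.ofAdd 1) p = p.swap := fun p => rfl
  have e01 : (0 : ZMod 2) ≠ 1 := by decide
  have e11 : (1 + 1 : ZMod 2) ≠ 1 := by decide
  obtain ⟨b, w⟩ := z
  cases b with
  | u => rfl
  | v => rfl
  | x1 j =>
    rcases h2 e with rfl | rfl <;> rcases h2 e' with rfl | rfl <;>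
      simp only [act, s0, s1, e01, e11, mul_one, one_mul, toAdd_one, toAdd_ofAdd, toAdd_mul,
        if_true, if_false, Prod.fst_mul, Prod.snd_mul, Prod.fst_swap, Prod.snd_swap] <;>
      first
      | exact congrArg (fun w : WT j => (⟨.x1 j, w⟩ : Σ b, MW m WT WΥ WΘ b)) (fam_mul _ _ j w)
      | exact congrArg (fun w : WT j => (⟨.x2 j, w⟩ : Σ b, MW m WT WΥ WΘ b)) (fam_mul _ _ j w)
  | x2 j =>
    rcases h2 e with rfl | rfl <;> rcases h2 e' with rfl | rfl <;>
      simp only [act, s0, s1, e01, e11, mul_one, one_mul, toAdd_one, toAdd_ofAdd, toAdd_mul,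
        if_true, if_false, Prod.fst_mul, Prod.snd_mul, Prod.fst_swap, Prod.snd_swap] <;>
      first
      | exact congrArg (fun w : WT j => (⟨.x1 j, w⟩ : Σ b, MW m WT WΥ WΘ b)) (fam_mul _ _ j w)
      | exact congrArg (fun w : WT j => (⟨.x2 j, w⟩ : Σ b, MW m WT WΥ WΘ b)) (fam_mul _ _ j w)
  | x3 i => rfl

/-- The permutation of the base induced by the target group. -/
def sg (e : Multiplicative (ZMod 2)) : ThetaV 3 3 m → ThetaV 3 3 m
  | .u => .u
  | .v => .v
  | .x1 j => if Multiplicative.toAdd e = 1 then .x2 j else .x1 j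
  | .x2 j => if Multiplicative.toAdd e = 1 then .x1 j else .x2 j
  | .x3 i => .x3 i

lemma sg_adj (e : Multiplicative (ZMod 2)) {b b' : ThetaV 3 3 m} (h : (theta 3 3 m).Adj b b') :
    (theta 3 3 m).Adj (sg e b) (sg e b') := by
  by_cases he : Multiplicative.toAdd e = 1
  · cases b <;> cases b' <;> simp only [sg, if_pos he] <;> exact h
  · cases b <;> cases b' <;> simp only [sg, if_neg he] <;> exact h

lemma act_root (a : Tgt TT TΥ TΘ tT tΥ tΘ) (b : ThetaV 3 3 m) :
    act a ⟨b, Mr m tT tΥ tΘ b⟩ = ⟨sg a.2.2.right b, Mr m tT tΥ tΘ _⟩ := by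
  cases b with
  | u => exact congrArg (Sigma.mk ThetaV.u) a.2.1.2
  | v => exact congrArg (Sigma.mk ThetaV.v) a.1.2
  | x1 j =>
    by_cases he : Multiplicative.toAdd a.2.2.right = 1
    · have hs : sg (m := m) a.2.2.right (.x1 j) = .x2 j := if_pos he
      rw [hs]
      refine (act_x1_pos a he j _).trans ?_
      exact congrArg (fun w : WT j => (⟨.x2 j, w⟩ : Σ b, MW m WT WΥ WΘ b)) (fam_root _ _)
    · have hs : sg (m := m) a.2.2.right (.x1 j) = .x1 j := if_neg he
      rw [hs]
      refine (act_x1_neg a he j _).trans ?_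
      exact congrArg (fun w : WT j => (⟨.x1 j, w⟩ : Σ b, MW m WT WΥ WΘ b)) (fam_root _ _)
  | x2 j =>
    by_cases he : Multiplicative.toAdd a.2.2.right = 1
    · have hs : sg (m := m) a.2.2.right (.x2 j) = .x1 j := if_pos he
      rw [hs]
      refine (act_x2_pos a he j _).trans ?_
      exact congrArg (fun w : WT j => (⟨.x1 j, w⟩ : Σ b, MW m WT WΥ WΘ b)) (fam_root _ _)
    · have hs : sg (m := m) a.2.2.right (.x2 j) = .x2 j := if_neg he
      rw [hs]
      refine (act_x2_neg a he j _).trans ?_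
      exact congrArg (fun w : WT j => (⟨.x2 j, w⟩ : Σ b, MW m WT WΥ WΘ b)) (fam_root _ _)
  | x3 i => rfl

/-- The model graph. -/
abbrev MG (m : ℕ) (TT : ∀ j, SimpleGraph (WT j)) (TΥ : SimpleGraph WΥ) (TΘ : SimpleGraph WΘ)
    (tT : ∀ j, WT j) (tΥ : WΥ) (tΘ : WΘ) : SimpleGraph (Σ b, MW m WT WΥ WΘ b) :=
  rp (theta 3 3 m) (MT m TT TΥ TΘ) (Mr m tT tΥ tΘ)

lemma act_adj (a : Tgt TT TΥ TΘ tT tΥ tΘ) {z z' : Σ b, MW m WT WΥ WΘ b}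
    (h : (MG m TT TΥ TΘ tT tΥ tΘ).Adj z z') :
    (MG m TT TΥ TΘ tT tΥ tΘ).Adj (act a z) (act a z') := by
  obtain ⟨b, w⟩ := z
  obtain ⟨b', w'⟩ := z'
  by_cases hb : b = b'
  · subst hb
    have h := rp_same.1 h
    cases b with
    | u => exact rp_same.2 (a.2.1.1.map_rel_iff.2 h)
    | v => exact rp_same.2 (a.1.1.map_rel_iff.2 h)
    | x1 j =>
      by_cases he : Multiplicative.toAdd a.2.2.right = 1
      · simp only [act, if_pos he]
        exact rp_same.2 ((fam a.2.2.left.2 j).1.map_rel_iff.2 h)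
      · simp only [act, if_neg he]
        exact rp_same.2 ((fam a.2.2.left.1 j).1.map_rel_iff.2 h)
    | x2 j =>
      by_cases he : Multiplicative.toAdd a.2.2.right = 1
      · simp only [act, if_pos he]
        exact rp_same.2 ((fam a.2.2.left.1 j).1.map_rel_iff.2 h)
      · simp only [act, if_neg he]
        exact rp_same.2 ((fam a.2.2.left.2 j).1.map_rel_iff.2 h)
    | x3 i => exact rp_same.2 h
  · obtain ⟨h1, rfl, rfl⟩ := (rp_diff hb).1 h
    rw [act_root, act_root]
    exact rp_root.2 (sg_adj _ h1)

/-- The action as a homomorphism into the automorphism group. -/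
def actHom (m : ℕ) (TT : ∀ j, SimpleGraph (WT j)) (TΥ : SimpleGraph WΥ) (TΘ : SimpleGraph WΘ)
    (tT : ∀ j, WT j) (tΥ : WΥ) (tΘ : WΘ) : Tgt TT TΥ TΘ tT tΥ tΘ →*
      (MG m TT TΥ TΘ tT tΥ tΘ ≃g MG m TT TΥ TΘ tT tΥ tΘ) where
  toFun a :=
    { toFun := act a
      invFun := act a⁻¹
      left_inv := fun z => by rw [← act_mul, inv_mul_cancel, act_one]
      right_inv := fun z => by rw [← act_mul, mul_inv_cancel, act_one]
      map_rel_iff' := by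
        intro z z'
        refine ⟨fun h => ?_, act_adj a⟩
        have := act_adj a⁻¹ h
        simpa only [Equiv.coe_fn_mk, ← act_mul, inv_mul_cancel, act_one] using this }
  map_one' := RelIso.ext fun z => act_one z
  map_mul' a b := RelIso.ext fun z => act_mul a b z

lemma actHom_apply (a : Tgt TT TΥ TΘ tT tΥ tΘ) (z : Σ b, MW m WT WΥ WΘ b) :
    actHom m TT TΥ TΘ tT tΥ tΘ a z = act a z := rfl

/-- A rooted automorphism family gives a triple. -/
lemma exists_fam (P : ∀ j, (TT j ≃g TT j) → Prop)
    (h : ∀ j, ∃ g : TT j ≃g TT j, g (tT j) = tT j ∧ P j g) :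
    ∃ g : ↥(autStab (TT 0) (tT 0)) × ↥(autStab (TT 1) (tT 1)) × ↥(autStab (TT 2) (tT 2)),
      ∀ j, P j (fam g j).1 := by
  choose g hg hP using h
  refine ⟨(⟨g 0, hg 0⟩, ⟨g 1, hg 1⟩, ⟨g 2, hg 2⟩), ?_⟩
  intro j
  fin_cases j
  · exact hP 0
  · exact hP 1
  · exact hP 2

lemma fam_ext_one (g : ↥(autStab (TT 0) (tT 0)) × ↥(autStab (TT 1) (tT 1)) ×
    ↥(autStab (TT 2) (tT 2))) (h : ∀ j w, (fam g j).1 w = w) : g = 1 := by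
  refine Prod.ext ?_ (Prod.ext ?_ ?_)
  · exact Subtype.ext (RelIso.ext (h 0))
  · exact Subtype.ext (RelIso.ext (h 1))
  · exact Subtype.ext (RelIso.ext (h 2))

lemma actHom_injective : Function.Injective (actHom m TT TΥ TΘ tT tΥ tΘ) := by
  rw [injective_iff_map_eq_one]
  intro a ha
  have h : ∀ z, act (m := m) a z = z := fun z => by rw [← actHom_apply, ha]; rfl
  have he : ¬ Multiplicative.toAdd a.2.2.right = 1 := by
    intro he
    have := h ⟨.x1 0, tT 0⟩
    simp only [act, if_pos he] at this
    have := congrArg Sigma.fst this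
    simp at this
  obtain ⟨h', k, ⟨⟨n1, n2⟩, e⟩⟩ := a
  have h2 : ∀ z : Multiplicative (ZMod 2), z = 1 ∨ z = Multiplicative.ofAdd 1 := by decide
  have e1 : e = 1 := by
    rcases h2 e with h | h
    · exact h
    · exact absurd h he
  have n1e : n1 = 1 := by
    refine fam_ext_one _ fun j w => ?_
    have := h ⟨.x1 j, w⟩
    simp only [act, if_neg he] at this
    exact eq_of_heq (Sigma.mk.inj this).2
  have n2e : n2 = 1 := by
    refine fam_ext_one _ fun j w => ?_
    have := h ⟨.x2 j, w⟩
    simp only [act, if_neg he] at this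
    exact eq_of_heq (Sigma.mk.inj this).2
  have he' : h' = 1 := Subtype.ext (RelIso.ext fun w => eq_of_heq (Sigma.mk.inj (h ⟨.v, w⟩)).2)
  have ke : k = 1 := Subtype.ext (RelIso.ext fun w => eq_of_heq (Sigma.mk.inj (h ⟨.u, w⟩)).2)
  subst e1 n1e n2e he' ke
  rfl

lemma actHom_surjective [∀ j, Finite (WT j)] [Finite WΥ] [Finite WΘ]
    (hTtree : ∀ j, (TT j).IsTree) (hΥtree : TΥ.IsTree) (hΘtree : TΘ.IsTree)
    (hne : ∀ e : TΥ ≃g TΘ, e tΥ ≠ tΘ)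
    (hside : m ≠ 3 ∨ ∃ j, Nontrivial (WT j)) :
    Function.Surjective (actHom m TT TΥ TΘ tT tΥ tΘ) := by
  intro f
  have hfin : ∀ b, Finite (MW m WT WΥ WΘ b) := by
    intro b
    cases b with
    | u => exact ‹Finite WΘ›
    | v => exact ‹Finite WΥ›
    | x1 j => exact (inferInstance : Finite (WT j))
    | x2 j => exact (inferInstance : Finite (WT j))
    | x3 i => exact (inferInstance : Finite Unit)
  have htree : ∀ b, (MT m TT TΥ TΘ b).IsTree := by
    intro b
    cases b with
    | u => exact hΘtree
    | v => exact hΥtree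
    | x1 j => exact hTtree j
    | x2 j => exact hTtree j
    | x3 i => exact (SimpleGraph.IsTree.of_subsingleton : (⊥ : SimpleGraph Unit).IsTree)
  obtain ⟨φ, hφ⟩ := rp_structure htree theta_deg f
  have hvu : φ .v ≠ .u := by
    intro h
    obtain ⟨g, hg, -⟩ := hφ _ _ h
    exact hne g hg
  have hx : m ≠ 3 ∨ ∃ j, ∀ i, φ (.x1 j) ≠ .x3 i ∧ φ (.x2 j) ≠ .x3 i := by
    rcases hside with h | ⟨j, hj⟩
    · exact Or.inl h
    · refine Or.inr ⟨j, fun i => ⟨fun h => ?_, fun h => ?_⟩⟩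
      · obtain ⟨g, -, -⟩ := hφ _ _ h
        have g' : WT j ≃ Unit := g.toEquiv
        exact not_subsingleton (WT j) g'.injective.subsingleton
      · obtain ⟨g, -, -⟩ := hφ _ _ h
        have g' : WT j ≃ Unit := g.toEquiv
        exact not_subsingleton (WT j) g'.injective.subsingleton
  obtain ⟨hv, hu, h3, h12⟩ := theta_aut φ hvu hx
  obtain ⟨h, hh, hh'⟩ := hφ _ _ hv
  obtain ⟨k, hk, hk'⟩ := hφ _ _ hu
  have h3' : ∀ i w, f ⟨.x3 i, w⟩ = ⟨.x3 i, w⟩ := by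
    intro i w
    obtain ⟨g, -, hg⟩ := hφ _ _ (h3 i)
    rw [hg]
    rfl
  have h01 : ¬ (0 : ZMod 2) = 1 := by decide
  rcases h12 with h12 | h12
  · obtain ⟨n1, hn1⟩ := exists_fam (TT := TT) (tT := tT)
      (fun j g => ∀ w : WT j, f ⟨.x1 j, w⟩ = ⟨.x1 j, g w⟩) (fun j => hφ _ _ (h12 j).1)
    obtain ⟨n2, hn2⟩ := exists_fam (TT := TT) (tT := tT)
      (fun j g => ∀ w : WT j, f ⟨.x2 j, w⟩ = ⟨.x2 j, g w⟩) (fun j => hφ _ _ (h12 j).2)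
    let a : Tgt TT TΥ TΘ tT tΥ tΘ := (⟨h, hh⟩, ⟨k, hk⟩, ⟨(n1, n2), 1⟩)
    refine ⟨a, RelIso.ext ?_⟩
    rintro ⟨b, w⟩
    cases b with
    | u => exact (hk' w).symm
    | v => exact (hh' w).symm
    | x1 j => exact (act_x1_neg a h01 j w).trans (hn1 j w).symm
    | x2 j => exact (act_x2_neg a h01 j w).trans (hn2 j w).symm
    | x3 i => exact (h3' i w).symm
  · obtain ⟨n2, hn2⟩ := exists_fam (TT := TT) (tT := tT)
      (fun j g => ∀ w : WT j, f ⟨.x1 j, w⟩ = ⟨.x2 j, g w⟩) (fun j => hφ _ _ (h12 j).1)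
    obtain ⟨n1, hn1⟩ := exists_fam (TT := TT) (tT := tT)
      (fun j g => ∀ w : WT j, f ⟨.x2 j, w⟩ = ⟨.x1 j, g w⟩) (fun j => hφ _ _ (h12 j).2)
    let a : Tgt TT TΥ TΘ tT tΥ tΘ :=
      (⟨h, hh⟩, ⟨k, hk⟩, ⟨(n1, n2), Multiplicative.ofAdd 1⟩)
    refine ⟨a, RelIso.ext ?_⟩
    rintro ⟨b, w⟩
    cases b with
    | u => exact (hk' w).symm
    | v => exact (hh' w).symm
    | x1 j => exact (act_x1_pos a rfl j w).trans (hn2 j w).symm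
    | x2 j => exact (act_x2_pos a rfl j w).trans (hn1 j w).symm
    | x3 i => exact (h3' i w).symm

end model

/-- Conjugation of automorphism groups by an isomorphism. -/
def autCongr {V V' : Type} {G : SimpleGraph V} {G' : SimpleGraph V'} (e : G ≃g G') :
    (G ≃g G) ≃* (G' ≃g G') where
  toFun f := (e.symm.trans f).trans e
  invFun f := (e.trans f).trans e.symm
  left_inv f := RelIso.ext fun z => by simp
  right_inv f := RelIso.ext fun z => by simp
  map_mul' f g := RelIso.ext fun z => by simp [RelIso.mul_apply]

end LinkType

/-- Lemma 2.6. With `T_i ≅ Λ_i` as rooted trees for `i = 1, 2, 3`,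
`Υ ≇ Θ` as rooted trees, and `ℓ ≠ 4` or some `T_i` nontrivial, the automorphism group of
`Δ` is `H × K × ((G₁ × G₂ × G₃) ≀ Z₂)` where `G_i = Aut(T_i)_root`, `H = Aut(Υ)_root` and
`K = Aut(Θ)_root`. -/
theorem aut_bicyclic_link_type
    (m : ℕ) {WT WΛ : Fin 3 → Type} {WΥ WΘ : Type}
    [∀ j, Fintype (WT j)] [∀ j, Fintype (WΛ j)] [Fintype WΥ] [Fintype WΘ]
    (TT : ∀ j, SimpleGraph (WT j)) (TΛ : ∀ j, SimpleGraph (WΛ j))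
    (TΥ : SimpleGraph WΥ) (TΘ : SimpleGraph WΘ)
    (tT : ∀ j, WT j) (tΛ : ∀ j, WΛ j) (tΥ : WΥ) (tΘ : WΘ)
    (hTtree : ∀ j, (TT j).IsTree) (hΛtree : ∀ j, (TΛ j).IsTree)
    (hΥtree : TΥ.IsTree) (hΘtree : TΘ.IsTree)
    (hiso : ∀ j, ∃ e : TT j ≃g TΛ j, e (tT j) = tΛ j)
    (hne : ∀ e : TΥ ≃g TΘ, e tΥ ≠ tΘ)
    (hside : m + 1 ≠ 4 ∨ Nontrivial (WT 0) ∨ Nontrivial (WT 1) ∨ Nontrivial (WT 2)) :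
    Nonempty ((stmt6Graph m TT TΛ TΥ TΘ tT tΛ tΥ tΘ ≃g
        stmt6Graph m TT TΛ TΥ TΘ tT tΛ tΥ tΘ) ≃*
      ↥(autStab TΥ tΥ) × ↥(autStab TΘ tΘ) ×
        wreathZ2 (↥(autStab (TT 0) (tT 0)) × ↥(autStab (TT 1) (tT 1)) ×
          ↥(autStab (TT 2) (tT 2)))) := by
  classical
  choose e he using hiso
  have hx : Function.Injective (stmt6x m) := by
    rintro ((i | i) | (i | i)) ((j | j) | (j | j)) h <;> simp [stmt6x] at h <;> simp [h]
  obtain ⟨E⟩ := LinkType.attach_iso (base := theta 3 3 m) (T := stmt6T TT TΛ TΥ TΘ)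
    (t := stmt6root tT tΛ tΥ tΘ) (x := stmt6x m) (T' := LinkType.MT m TT TΥ TΘ)
    (r' := LinkType.Mr m tT tΥ tΘ) hx
    (fun i => match i with
      | .inl (.inl j) => (RelIso.refl _ : TT j ≃g TT j)
      | .inl (.inr j) => (e j).symm
      | .inr (.inl _) => (RelIso.refl _ : TΥ ≃g TΥ)
      | .inr (.inr _) => (RelIso.refl _ : TΘ ≃g TΘ))
    (by
      rintro ((j | j) | (j | j))
      · rfl
      · show (e j).symm (tΛ j) = tT j
        rw [← he, RelIso.symm_apply_apply]
      · rfl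
      · rfl)
    (by
      intro b
      cases b with
      | u => exact Or.inl ⟨.inr (.inr ()), rfl⟩
      | v => exact Or.inl ⟨.inr (.inl ()), rfl⟩
      | x1 j => exact Or.inl ⟨.inl (.inl j), rfl⟩
      | x2 j => exact Or.inl ⟨.inl (.inr j), rfl⟩
      | x3 i => exact Or.inr (inferInstance : Subsingleton Unit))
  have hside' : m ≠ 3 ∨ ∃ j, Nontrivial (WT j) := by
    rcases hside with h | h | h | h
    · exact Or.inl (by omega)
    · exact Or.inr ⟨_, h⟩
    · exact Or.inr ⟨_, h⟩
    · exact Or.inr ⟨_, h⟩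
  exact ⟨(LinkType.autCongr E).trans (MulEquiv.ofBijective (LinkType.actHom m TT TΥ TΘ tT tΥ tΘ)
    ⟨LinkType.actHom_injective,
      LinkType.actHom_surjective hTtree hΥtree hΘtree hne hside'⟩).symm⟩
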